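/- Let a, b, b', c be complex numbers with c not a nonpositive integer, and let x, y be real numbers with |x| < 1 and |y| < 1 such that |y/(y−1)| < 1. Then every Appell F₁ function can be written as an Appell F₃ function: F₁(a; b, b'; c; x, y) = (1−y)^{−b'} · F₃(a, c−a; b, b'; c; x, y/(y−1)). -/

import Mathlib

noncomputable def poch (a : ℂ) (n : ℕ) : ℂ := ∏ i ∈ Finset.range n, (a + i)

/-- Appell series F₁(a;b,b';c;x,y). -/
noncomputable def appellF1 (a b b' c x y : ℂ) : ℂ :=
  ∑' p : ℕ × ℕ, poch a (p.1 + p.2) * poch b p.1 * poch b' p.2 /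
    (p.1.factorial * p.2.factorial * poch c (p.1 + p.2)) * x ^ p.1 * y ^ p.2

/-- Appell series F₃(a,a';b,b';c;x,y). -/
noncomputable def appellF3 (a a' b b' c x y : ℂ) : ℂ :=
  ∑' p : ℕ × ℕ, poch a p.1 * poch a' p.2 * poch b p.1 * poch b' p.2 /
    (p.1.factorial * p.2.factorial * poch c (p.1 + p.2)) * x ^ p.1 * y ^ p.2

open Filter Topology

lemma poch_zero (a : ℂ) : poch a 0 = 1 := by simp [poch]

lemma poch_succ (a : ℂ) (n : ℕ) : poch a (n + 1) = poch a n * (a + n) := by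
  simp [poch, Finset.prod_range_succ]

lemma poch_succ_left (a : ℂ) (n : ℕ) : poch a (n + 1) = a * poch (a + 1) n := by
  unfold poch
  rw [Finset.prod_range_succ', mul_comm]
  congr 1
  · simp
  · refine Finset.prod_congr rfl fun i _ => ?_
    push_cast; ring

lemma poch_add (a : ℂ) (m n : ℕ) : poch a (m + n) = poch a m * poch (a + m) n := by
  unfold poch
  rw [Finset.prod_range_add]
  congr 1
  refine Finset.prod_congr rfl fun i _ => ?_
  push_cast; ring

lemma poch_one (n : ℕ) : poch 1 n = n.factorial := by
  induction n with
  | zero => simp [poch_zero]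
  | succ n ih => rw [poch_succ, ih, Nat.factorial_succ]; push_cast; ring

lemma poch_ne_zero {c : ℂ} (hc : ∀ n : ℕ, c ≠ -(n : ℂ)) (n : ℕ) : poch c n ≠ 0 := by
  unfold poch
  rw [Finset.prod_ne_zero_iff]
  intro i _ h
  exact hc i (eq_neg_of_add_eq_zero_left h)

lemma shift_ne {c : ℂ} (hc : ∀ n : ℕ, c ≠ -(n : ℂ)) (m n : ℕ) : c + m ≠ -(n : ℂ) := by
  intro h
  apply hc (m + n)
  push_cast
  linear_combination h

lemma one_ne_neg (n : ℕ) : (1 : ℂ) ≠ -(n : ℂ) := by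
  intro h
  have : ((n + 1 : ℕ) : ℂ) = 0 := by push_cast; linear_combination h
  exact Nat.succ_ne_zero n (by exact_mod_cast this)

/-- Chu-Vandermonde identity. -/
lemma chu (d : ℂ) (N : ℕ) : ∀ c : ℂ,
    ∑ p ∈ Finset.HasAntidiagonal.antidiagonal N, (N.choose p.1 : ℂ) *
      ((-1) ^ p.1 * poch d p.1 * poch (c + p.1) p.2) = poch (c - d) N := by
  induction N with
  | zero => intro c; simp [poch_zero]
  | succ N ih =>
    intro c
    rw [Finset.sum_antidiagonal_choose_succ_mul
      (fun i j => (-1 : ℂ) ^ i * poch d i * poch (c + i) j) N, ← Finset.sum_add_distrib,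
      poch_succ_left, show c - d + 1 = (c + 1) - d by ring, ← ih (c + 1), Finset.mul_sum]
    refine Finset.sum_congr rfl ?_
    rintro ⟨i, j⟩ hij
    rw [Finset.HasAntidiagonal.mem_antidiagonal] at hij
    simp only
    rw [← Nat.choose_symm_of_eq_add hij.symm, poch_succ_left, poch_succ]
    push_cast
    rw [show c + (i : ℂ) + 1 = c + 1 + i by ring, show c + ((i : ℂ) + 1) = c + 1 + i by ring]
    ring

/-- Binomial series. -/
lemma desc_neg (s : ℂ) (n : ℕ) :
    (descPochhammer ℤ n).smeval (-s) = (-1) ^ n * poch s n := by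
  induction n with
  | zero => simp [poch_zero]
  | succ n ih =>
    simp [descPochhammer_succ_right, Polynomial.smeval_mul, Polynomial.smeval_natCast, ih, 
      poch_succ]
    ring

lemma binom_hasSum (s y : ℂ) (hy : ‖y‖ < 1) :
    HasSum (fun k : ℕ => poch s k / k.factorial * y ^ k) ((1 - y) ^ (-s)) := by
  have h := (Complex.one_add_cpow_hasFPowerSeriesOnBall_zero (a := -s)).hasSum (y := -y)
    (by rw [← ENNReal.ofReal_one, Metric.eball_ofReal]; simpa using hy)
  simp only [binomialSeries_apply, zero_add] at h
  rw [← sub_eq_add_neg] at h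
  suffices he : (fun k : ℕ => poch s k / k.factorial * y ^ k) = _ from he ▸ h
  funext k
  rw [Ring.choose_eq_smul, desc_neg]
  simp only [smul_eq_mul, List.ofFn_const, List.prod_replicate]
  rw [neg_pow y]
  have : ((-1 : ℂ) ^ k) * (-1) ^ k = 1 := by rw [← mul_pow]; simp
  rw [div_eq_mul_inv]
  linear_combination (-(poch s k) * ((k.factorial : ℂ))⁻¹ * y ^ k) * this

/-- Subexponential growth of a double sequence. -/
def SubE (f : ℕ × ℕ → ℂ) : Prop :=
  ∀ R : ℝ, 1 < R → ∃ C : ℝ, 0 ≤ C ∧ ∀ p : ℕ × ℕ, ‖f p‖ ≤ C * R ^ (p.1 + p.2)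

lemma SubE.mul {f g : ℕ × ℕ → ℂ} (hf : SubE f) (hg : SubE g) : SubE (fun p => f p * g p) := by
  intro R hR
  have hs : 1 < √R := by rw [Real.lt_sqrt (by norm_num)]; simpa using hR
  obtain ⟨C, hC, h1⟩ := hf _ hs
  obtain ⟨D, hD, h2⟩ := hg _ hs
  refine ⟨C * D, by positivity, fun p => ?_⟩
  rw [norm_mul]
  calc ‖f p‖ * ‖g p‖ ≤ (C * √R ^ (p.1 + p.2)) * (D * √R ^ (p.1 + p.2)) := by
        gcongr
        · exact h1 p
        · exact h2 p
    _ = C * D * (√R * √R) ^ (p.1 + p.2) := by rw [mul_pow]; ring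
    _ = _ := by rw [Real.mul_self_sqrt (by linarith)]

lemma SubE.of_bound {f : ℕ × ℕ → ℂ} (h : ∀ p, ‖f p‖ ≤ 1) : SubE f := by
  intro R hR
  refine ⟨1, by norm_num, fun p => (h p).trans ?_⟩
  rw [one_mul]
  exact one_le_pow₀ hR.le

lemma poch_bound (a : ℂ) {c : ℂ} (hc : ∀ n : ℕ, c ≠ -(n : ℂ)) (R : ℝ) (hR : 1 < R) :
    ∃ C : ℝ, 0 ≤ C ∧ ∀ n : ℕ, ‖poch a n / poch c n‖ ≤ C * R ^ n := by
  have hR0 : (0 : ℝ) < R := by linarith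
  have hcn : ∀ n : ℕ, c + n ≠ 0 := fun n h => hc n (eq_neg_of_add_eq_zero_left h)
  have hlim : Tendsto (fun n : ℕ => ‖(a + n) / (c + n)‖) atTop (𝓝 1) := by
    have h1 : Tendsto (fun n : ℕ => (a + n) / (c + n)) atTop (𝓝 1) := by
      have h2 : Tendsto (fun n : ℕ => 1 + (a - c) / (c + n)) atTop (𝓝 (1 + 0)) := by
        refine tendsto_const_nhds.add ?_
        have h3 : Tendsto (fun n : ℕ => c + (n : ℂ)) atTop (Bornology.cobounded ℂ) :=
          (tendsto_const_add_cobounded c).comp tendsto_natCast_atTop_cobounded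
        have h4 := (tendsto_inv₀_cobounded.comp h3).const_mul (a - c)
        simpa [div_eq_mul_inv] using h4
      rw [add_zero] at h2
      refine h2.congr fun n => ?_
      field_simp [hcn n]
      ring
    simpa using h1.norm
  obtain ⟨r, hr1, hrR⟩ := exists_between hR
  have hsum : Summable (fun n : ℕ => poch a n / poch c n * ((R : ℂ)⁻¹) ^ n) := by
    refine summable_of_ratio_norm_eventually_le (r := r / R) ((div_lt_one hR0).2 hrR) ?_
    filter_upwards [hlim.eventually (gt_mem_nhds hr1)] with n hn
    have : poch a (n + 1) / poch c (n + 1) * ((R : ℂ)⁻¹) ^ (n + 1) =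
        ((a + n) / (c + n) * (R : ℂ)⁻¹) * (poch a n / poch c n * ((R : ℂ)⁻¹) ^ n) := by
      rw [poch_succ, poch_succ, mul_div_mul_comm]; ring
    rw [this, norm_mul]
    gcongr
    rw [norm_mul, norm_inv, Complex.norm_real, Real.norm_of_nonneg hR0.le, div_eq_mul_inv r]
    gcongr
  obtain ⟨C, hC⟩ := hsum.tendsto_atTop_zero.norm.bddAbove_range
  have hC' : ∀ n : ℕ, ‖poch a n / poch c n * ((R : ℂ)⁻¹) ^ n‖ ≤ C := fun n => hC ⟨n, rfl⟩
  refine ⟨C, (norm_nonneg _).trans (hC' 0), fun n => ?_⟩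
  have := hC' n
  rw [norm_mul, norm_pow, norm_inv, Complex.norm_real, Real.norm_of_nonneg hR0.le, inv_pow,
    ← div_eq_mul_inv, div_le_iff₀ (by positivity)] at this
  exact this

lemma SubE.fst (a : ℂ) {c : ℂ} (hc : ∀ n : ℕ, c ≠ -(n : ℂ)) :
    SubE (fun p => poch a p.1 / poch c p.1) := by
  intro R hR
  obtain ⟨C, hC, h⟩ := poch_bound a hc R hR
  refine ⟨C, hC, fun p => (h p.1).trans ?_⟩
  have : R ^ p.1 ≤ R ^ (p.1 + p.2) := pow_le_pow_right₀ hR.le (by omega)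
  gcongr

lemma SubE.snd (a : ℂ) {c : ℂ} (hc : ∀ n : ℕ, c ≠ -(n : ℂ)) :
    SubE (fun p => poch a p.2 / poch c p.2) := by
  intro R hR
  obtain ⟨C, hC, h⟩ := poch_bound a hc R hR
  refine ⟨C, hC, fun p => (h p.2).trans ?_⟩
  have : R ^ p.2 ≤ R ^ (p.1 + p.2) := pow_le_pow_right₀ hR.le (by omega)
  gcongr

lemma SubE.both (a : ℂ) {c : ℂ} (hc : ∀ n : ℕ, c ≠ -(n : ℂ)) :
    SubE (fun p => poch a (p.1 + p.2) / poch c (p.1 + p.2)) := by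
  intro R hR
  obtain ⟨C, hC, h⟩ := poch_bound a hc R hR
  exact ⟨C, hC, fun p => h _⟩

lemma SubE.summable {f : ℕ × ℕ → ℂ} (hf : SubE f) {x y : ℂ} (hx : ‖x‖ < 1) (hy : ‖y‖ < 1) :
    Summable (fun p : ℕ × ℕ => f p * x ^ p.1 * y ^ p.2) := by
  obtain ⟨t, ht, ht1⟩ := exists_between (max_lt (max_lt hx hy) zero_lt_one)
  have htx : ‖x‖ < t := lt_of_le_of_lt ((le_max_left _ _).trans (le_max_left _ _)) ht
  have hty : ‖y‖ < t := lt_of_le_of_lt ((le_max_right _ _).trans (le_max_left _ _)) ht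
  have ht0 : 0 < t := lt_of_le_of_lt (le_max_right _ _) ht
  obtain ⟨C, hC, h⟩ := hf t⁻¹ ((one_lt_inv₀ ht0).2 ht1)
  have hg : ∀ z : ℂ, ‖z‖ < t → Summable (fun n : ℕ => (t⁻¹ * ‖z‖) ^ n) := fun z hz => by
    refine summable_geometric_of_lt_one (by positivity) ?_
    rw [inv_mul_lt_iff₀ ht0]; simpa using hz
  have hs := ((hg x htx).mul_of_nonneg (hg y hty) (fun n => by positivity)
    (fun n => by positivity)).mul_left C
  refine Summable.of_norm_bounded hs fun p => ?_
  rw [norm_mul, norm_mul, norm_pow, norm_pow]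
  calc ‖f p‖ * ‖x‖ ^ p.1 * ‖y‖ ^ p.2 ≤ (C * t⁻¹ ^ (p.1 + p.2)) * ‖x‖ ^ p.1 * ‖y‖ ^ p.2 := by
        gcongr
        exact h p
    _ = _ := by rw [mul_pow, mul_pow, pow_add]; ring

lemma fact_ne (n : ℕ) : (n.factorial : ℂ) ≠ 0 := by exact_mod_cast n.factorial_ne_zero

lemma summable_F1 (a b b' : ℂ) {c x y : ℂ} (hc : ∀ n : ℕ, c ≠ -(n : ℂ))
    (hx : ‖x‖ < 1) (hy : ‖y‖ < 1) :
    Summable (fun p : ℕ × ℕ => poch a (p.1 + p.2) * poch b p.1 * poch b' p.2 /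
    (p.1.factorial * p.2.factorial * poch c (p.1 + p.2)) * x ^ p.1 * y ^ p.2) := by
  have h := (((SubE.both a hc).mul (SubE.fst b one_ne_neg)).mul (SubE.snd b' one_ne_neg)).summable hx hy
  refine h.congr fun p => ?_
  have := poch_ne_zero hc (p.1 + p.2)
  have := fact_ne p.1
  have := fact_ne p.2
  simp only [poch_one]
  field_simp

lemma summable_F3 (a a' b b' : ℂ) {c x y : ℂ} (hc : ∀ n : ℕ, c ≠ -(n : ℂ))
    (hx : ‖x‖ < 1) (hy : ‖y‖ < 1) :
    Summable (fun p : ℕ × ℕ => poch a p.1 * poch a' p.2 * poch b p.1 * poch b' p.2 /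
    (p.1.factorial * p.2.factorial * poch c (p.1 + p.2)) * x ^ p.1 * y ^ p.2) := by
  have hb : SubE (fun p => (p.1.factorial * p.2.factorial : ℂ) / (p.1 + p.2).factorial) := by
    refine SubE.of_bound fun p => ?_
    rw [norm_div, norm_mul]
    simp only [Complex.norm_natCast]
    rw [div_le_one (by positivity)]
    exact_mod_cast Nat.le_of_dvd (Nat.factorial_pos _) (Nat.factorial_mul_factorial_dvd_factorial_add _ _)
  have h := ((((((SubE.both 1 hc).mul (SubE.fst b one_ne_neg)).mul (SubE.snd b' one_ne_neg)).mul
    (SubE.fst a one_ne_neg)).mul (SubE.snd a' one_ne_neg)).mul hb).summable hx hy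
  refine h.congr fun p => ?_
  have := poch_ne_zero hc (p.1 + p.2)
  have := fact_ne p.1
  have := fact_ne p.2
  have := fact_ne (p.1 + p.2)
  simp only [poch_one]
  field_simp

lemma summable_pfaff (d b : ℂ) {c y : ℂ} (hc : ∀ n : ℕ, c ≠ -(n : ℂ)) (hy : ‖y‖ < 1 / 2) :
    Summable (fun p : ℕ × ℕ => poch d p.1 * poch b (p.1 + p.2) /
      (poch c p.1 * p.1.factorial * p.2.factorial) * (-y) ^ p.1 * y ^ p.2) := by
  have hb : SubE (fun p => ((p.1 + p.2).choose p.1 : ℂ) / 2 ^ (p.1 + p.2)) := by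
    refine SubE.of_bound fun p => ?_
    rw [norm_div, norm_pow]
    simp only [Complex.norm_natCast, Complex.norm_ofNat]
    rw [div_le_one (by positivity)]
    exact_mod_cast Nat.choose_le_two_pow _ _
  have h1 : ‖2 * -y‖ < 1 := by rw [norm_mul, norm_neg, Complex.norm_ofNat]; linarith
  have h2 : ‖2 * y‖ < 1 := by rw [norm_mul, Complex.norm_ofNat]; linarith
  have h := (((SubE.fst d hc).mul (SubE.both b one_ne_neg)).mul hb).summable h1 h2
  refine h.congr fun p => ?_
  have := poch_ne_zero hc p.1
  have := fact_ne p.1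
  have := fact_ne p.2
  have := fact_ne (p.1 + p.2)
  have hch : ((p.1 + p.2).choose p.1 : ℂ) * p.1.factorial * p.2.factorial =
      (p.1 + p.2).factorial := by
    have := Nat.add_choose_mul_factorial_mul_factorial p.1 p.2
    rw [Nat.choose_symm_add]
    exact_mod_cast this
  simp only [poch_one]
  rw [← hch, mul_pow, mul_pow, pow_add]
  have : ((p.1 + p.2).choose p.1 : ℂ) ≠ 0 := by
    exact_mod_cast (Nat.choose_pos (Nat.le_add_right _ _)).ne'
  field_simp

/-- Pfaff transformation. -/
lemma pfaff (a b : ℂ) {c y : ℂ} (hc : ∀ n : ℕ, c ≠ -(n : ℂ)) (hy : ‖y‖ < 1 / 2) :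
    ∑' n : ℕ, poch a n * poch b n / (n.factorial * poch c n) * y ^ n =
      (1 - y) ^ (-b) * ∑' n : ℕ, poch (c - a) n * poch b n / (n.factorial * poch c n) *
        (y / (y - 1)) ^ n := by
  have hy1 : ‖y‖ < 1 := by linarith
  have hne : 1 - y ≠ 0 := by
    intro h
    have : y = 1 := by linear_combination -h
    rw [this] at hy1; simp at hy1
  have hne' : y - 1 ≠ 0 := by
    intro h; apply hne; linear_combination -h
  have hs := summable_pfaff (c - a) b hc hy
  have e1 := hs.tsum_prod
  have e2 := (Finset.HasAntidiagonal.sigmaAntidiagonalEquivProd (A := ℕ)).tsum_eq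
    (fun p : ℕ × ℕ => poch (c - a) p.1 * poch b (p.1 + p.2) /
      (poch c p.1 * p.1.factorial * p.2.factorial) * (-y) ^ p.1 * y ^ p.2)
  have hs' := (Finset.HasAntidiagonal.sigmaAntidiagonalEquivProd (A := ℕ)).summable_iff.2 hs
  rw [← e2] at e1
  have e3 := hs'.tsum_sigma' (fun n => (hasSum_fintype _).summable)
  simp only [Function.comp_def] at e3
  rw [e3] at e1
  rw [← tsum_mul_left]
  convert e1 using 1
  · refine tsum_congr fun N => ?_
    rw [tsum_fintype]
    simp only [Finset.HasAntidiagonal.sigmaAntidiagonalEquivProd_apply]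
    rw [Finset.sum_coe_sort (Finset.HasAntidiagonal.antidiagonal N) (fun p : ℕ × ℕ =>
      poch (c - a) p.1 * poch b (p.1 + p.2) /
      (poch c p.1 * p.1.factorial * p.2.factorial) * (-y) ^ p.1 * y ^ p.2)]
    have h := chu (c - a) N c
    rw [sub_sub_cancel] at h
    rw [← h, Finset.sum_mul, Finset.sum_div, Finset.sum_mul]
    refine Finset.sum_congr rfl ?_
    rintro ⟨i, j⟩ hij
    rw [Finset.HasAntidiagonal.mem_antidiagonal] at hij
    simp only at hij ⊢
    subst hij
    have hch : ((i + j).choose i : ℂ) * i.factorial * j.factorial = (i + j).factorial := by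
      have := Nat.add_choose_mul_factorial_mul_factorial i j
      rw [Nat.choose_symm_add]
      exact_mod_cast this
    have : ((i + j).choose i : ℂ) ≠ 0 := by
      exact_mod_cast (Nat.choose_pos (Nat.le_add_right _ _)).ne'
    have := poch_ne_zero hc i
    have := poch_ne_zero (shift_ne hc i) j
    have := fact_ne i
    have := fact_ne j
    rw [← hch, poch_add c, neg_pow y, pow_add]
    field_simp
  · refine tsum_congr fun n => ?_
    have hb := (binom_hasSum (b + n) y hy1).tsum_eq
    have h1 : (1 - y) ^ (-b) * (y / (y - 1)) ^ n = (-y) ^ n * (1 - y) ^ (-(b + n)) := by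
      rw [neg_add, ← sub_eq_add_neg, Complex.cpow_sub _ _ hne, Complex.cpow_natCast,
        show y / (y - 1) = (-y) / (1 - y) by field_simp; ring, div_pow]
      ring
    have h2 : (1 - y) ^ (-b) * (poch (c - a) n * poch b n / (n.factorial * poch c n) *
        (y / (y - 1)) ^ n) = (poch (c - a) n * poch b n / (n.factorial * poch c n)) *
        ((-y) ^ n * (1 - y) ^ (-(b + n))) := by rw [← h1]; ring
    rw [h2, ← hb, ← tsum_mul_left, ← tsum_mul_left]
    refine tsum_congr fun k => ?_
    have := poch_ne_zero hc n
    have := fact_ne n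
    have := fact_ne k
    simp only
    rw [poch_add b]
    field_simp

lemma pfaff_real (a b : ℂ) {c : ℂ} {y : ℝ} (hc : ∀ n : ℕ, c ≠ -(n : ℂ)) (hy : |y| < 1)
    (hy' : |y / (y - 1)| < 1) :
    ∑' n : ℕ, poch a n * poch b n / (n.factorial * poch c n) * (y : ℂ) ^ n =
      ((1 : ℂ) - y) ^ (-b) * ∑' n : ℕ, poch (c - a) n * poch b n / (n.factorial * poch c n) *
        ((y : ℂ) / (y - 1)) ^ n := by
  have hlt := abs_lt.1 hy
  have h1y : 0 < 1 - y := by linarith [hlt.2]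
  have hhalf : y < 1 / 2 := by
    have := (abs_lt.1 hy').1
    rw [show y / (y - 1) = -(y / (1 - y)) by
      rw [← div_neg]; congr 1; ring] at this
    have h2 : y / (1 - y) < 1 := by linarith
    rw [div_lt_one h1y] at h2
    linarith
  by_cases h : -(1 / 2) < y
  · apply pfaff a b hc
    rw [Complex.norm_real, Real.norm_eq_abs, abs_lt]
    exact ⟨h, hhalf⟩
  · push Not at h
    have hw : ‖((y : ℂ) / (y - 1))‖ < 1 / 2 := by
      rw [show (y : ℂ) / (y - 1) = ((y / (y - 1) : ℝ) : ℂ) by push_cast; rfl, Complex.norm_real,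
        Real.norm_eq_abs, abs_div, abs_of_nonpos (by linarith : y ≤ 0),
        abs_of_neg (by linarith : y - 1 < 0), div_lt_iff₀ (by linarith)]
      linarith [hlt.1]
    have hne : (y : ℂ) - 1 ≠ 0 := by
      have : y - 1 ≠ 0 := by linarith
      exact_mod_cast this
    have key := pfaff (c - a) b hc hw
    have e : (y : ℂ) / (y - 1) / ((y : ℂ) / (y - 1) - 1) = y := by
      have : (y : ℂ) / (y - 1) - 1 = 1 / (y - 1) := by field_simp; ring
      rw [this]; field_simp
    rw [e, sub_sub_cancel] at key
    rw [key, ← mul_assoc]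
    have e2 : ((1 : ℂ) - y) ^ (-b) * (1 - (y : ℂ) / (y - 1)) ^ (-b) = 1 := by
      have e3 : (1 - (y : ℂ) / (y - 1)) = (((1 - y)⁻¹ : ℝ) : ℂ) := by
        have : (1 : ℂ) - y ≠ 0 := by exact_mod_cast h1y.ne'
        push_cast
        field_simp
        ring
      rw [e3, show (1 : ℂ) - y = ((1 - y : ℝ) : ℂ) by push_cast; rfl,
        ← Complex.mul_cpow_ofReal_nonneg h1y.le (inv_nonneg.2 h1y.le), ← Complex.ofReal_mul,
        mul_inv_cancel₀ h1y.ne']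
      simp
    rw [e2, one_mul]



theorem appellF1_eq_appellF3 (a b b' c : ℂ) (x y : ℝ)
    (hc : ∀ n : ℕ, c ≠ -(n : ℂ))
    (hx : |x| < 1) (hy : |y| < 1) (hy' : |y / (y - 1)| < 1) :
    appellF1 a b b' c x y =
      ((1 : ℂ) - y) ^ (-b') * appellF3 a (c - a) b b' c x ((y : ℂ) / (y - 1)) := by

  have hxn : ‖(x : ℂ)‖ < 1 := by simpa using hx
  have hyn : ‖(y : ℂ)‖ < 1 := by simpa using hy
  have hwn : ‖(y : ℂ) / (y - 1)‖ < 1 := by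
    rw [show (y : ℂ) / (y - 1) = ((y / (y - 1) : ℝ) : ℂ) by push_cast; rfl, Complex.norm_real]
    exact hy'
  unfold appellF1 appellF3
  rw [(summable_F1 a b b' hc hxn hyn).tsum_prod, (summable_F3 a (c - a) b b' hc hxn hwn).tsum_prod,
    ← tsum_mul_left]
  refine tsum_congr fun m => ?_
  have key := pfaff_real (a + m) b' (shift_ne hc m) hy hy'
  rw [show c + (m : ℂ) - (a + m) = c - a by ring] at key
  have hm := poch_ne_zero hc m
  have hmf := fact_ne m
  have l : ∀ n : ℕ, poch a (m + n) * poch b m * poch b' n /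
      (m.factorial * n.factorial * poch c (m + n)) * (x : ℂ) ^ m * (y : ℂ) ^ n =
      (poch a m * poch b m / (m.factorial * poch c m) * (x : ℂ) ^ m) *
      (poch (a + m) n * poch b' n / (n.factorial * poch (c + m) n) * (y : ℂ) ^ n) := by
    intro n
    have := poch_ne_zero (shift_ne hc m) n
    have := fact_ne n
    rw [poch_add a, poch_add c]
    field_simp
  have r : ∀ n : ℕ, poch a m * poch (c - a) n * poch b m * poch b' n /
      (m.factorial * n.factorial * poch c (m + n)) * (x : ℂ) ^ m * ((y : ℂ) / (y - 1)) ^ n =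
      (poch a m * poch b m / (m.factorial * poch c m) * (x : ℂ) ^ m) *
      (poch (c - a) n * poch b' n / (n.factorial * poch (c + m) n) *
        ((y : ℂ) / (y - 1)) ^ n) := by
    intro n
    have := poch_ne_zero (shift_ne hc m) n
    have := fact_ne n
    rw [poch_add c, mul_comm (poch a m) (poch (c - a) n)]
    generalize ((y : ℂ) / (y - 1)) ^ n = w
    field_simp
  simp only [l, r, tsum_mul_left]
  rw [key]
  ring
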